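/- Let V be a set of n distinct points in C^d and suppose there is a subset ℬ ⊆ V such that at least δn^2 pairs (b, v) ∈ ℬ × (V \ ℬ) lie on a special line (a line through at least 3 points of V). Then there exists ℬ' ⊆ ℬ with |ℬ'| ≥ (δ/6)n whose affine dimension is at most O(1/δ). -/

import Mathlib

open Finset

lemma layer_cake {ι κ : Type*} [Fintype ι] [Fintype κ] (f : ι → ℝ) (g : κ → ℝ)
    (hf : ∀ i, 0 ≤ f i) (hg : ∀ j, 0 ≤ g j) (s : ℝ)
    (h : ∀ θ : ℝ, ((univ.filter fun i => θ ≤ f i).card : ℝ) ≤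
      s * ((univ.filter fun j => θ ≤ g j).card : ℝ)) :
    ∑ i, f i ≤ s * ∑ j, g j := by
  classical
  obtain ⟨M, hM⟩ : ∃ M : ℝ, (∀ i, f i ≤ M) ∧ ∀ j, g j ≤ M := by
    refine ⟨∑ i, f i + ∑ j, g j, fun i => ?_, fun j => ?_⟩
    · have := Finset.single_le_sum (f := f) (fun i _ => hf i) (mem_univ i)
      have := Finset.sum_nonneg (s := univ) (f := g) (fun i _ => hg i)
      linarith
    · have := Finset.single_le_sum (f := g) (fun i _ => hg i) (mem_univ j)
      have := Finset.sum_nonneg (s := univ) (f := f) (fun i _ => hf i)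
      linarith
  have hint : ∀ a : ℝ, MeasureTheory.IntegrableOn ((Set.Iic a).indicator (fun _ : ℝ => (1 : ℝ)))
      (Set.Ioc 0 M) := fun a =>
    (MeasureTheory.integrable_const (1 : ℝ)).indicator measurableSet_Iic
  have key : ∀ a : ℝ, 0 ≤ a → a ≤ M →
      ∫ t in Set.Ioc 0 M, (Set.Iic a).indicator (fun _ : ℝ => (1 : ℝ)) t = a := by
    intro a h0 h1
    rw [MeasureTheory.setIntegral_indicator measurableSet_Iic]
    have : Set.Ioc 0 M ∩ Set.Iic a = Set.Ioc 0 a := by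
      ext t; simp only [Set.mem_inter_iff, Set.mem_Ioc, Set.mem_Iic]
      constructor
      · rintro ⟨⟨a, b⟩, c⟩; exact ⟨a, c⟩
      · rintro ⟨a, b⟩; exact ⟨⟨a, b.trans h1⟩, b⟩
    rw [this]
    simp [h0]
  have e2 : ∑ j, f j = ∫ t in Set.Ioc 0 M, ∑ i, (Set.Iic (f i)).indicator (fun _ : ℝ => (1 : ℝ)) t := by
    rw [MeasureTheory.integral_finsetSum _ (fun i _ => hint (f i))]
    exact Finset.sum_congr rfl fun i _ => (key _ (hf i) (hM.1 i)).symm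
  rw [e2]
  have e3 : ∑ j, g j = ∫ t in Set.Ioc 0 M, ∑ i, (Set.Iic (g i)).indicator (fun _ : ℝ => (1 : ℝ)) t := by
    rw [MeasureTheory.integral_finsetSum _ (fun i _ => hint (g i))]
    exact Finset.sum_congr rfl fun i _ => (key _ (hg i) (hM.2 i)).symm
  rw [e3, ← MeasureTheory.integral_const_mul]
  apply MeasureTheory.integral_mono
  · exact MeasureTheory.integrable_finsetSum _ (fun i _ => hint (f i))
  · exact (MeasureTheory.integrable_finsetSum _ (fun i _ => hint (g i))).const_mul s
  · intro t
    have := h t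
    simp only [Set.indicator_apply, Set.mem_Iic, Finset.sum_boole]
    exact this

/-- minimum weight basis -/
lemma min_basis {E : Type*} [AddCommGroup E] [Module ℂ E] {ι J : Type*} [Fintype ι] [Fintype J]
    {k : ℕ} (e : Module.Basis (Fin k) ℂ E) (y : J → E) (inc : Fin k → J) (hinc : ∀ i, y (inc i) = e i)
    (x : ι → J) (s : ℝ) 
    (hs : ∀ U : Submodule ℂ E, (Nat.card {i // y (x i) ∈ U} : ℝ) ≤ s * Module.finrank ℂ U)
    (l : J → ℝ) (hl : ∀ j, 0 ≤ l j) :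
    ∃ b : Fin k → J, LinearIndependent ℂ (fun i => y (b i)) ∧ ∑ i, l (x i) ≤ s * ∑ j, l (b j) := by
  classical
  obtain ⟨b, hb, hmax⟩ := Finset.exists_max_image
    (univ.filter fun b : Fin k → J => LinearIndependent ℂ (fun i => y (b i)))
    (fun b => ∑ j, l (b j)) ⟨inc, by simpa [hinc] using e.linearIndependent⟩
  simp only [mem_filter, mem_univ, true_and] at hb hmax
  refine ⟨b, hb, layer_cake _ _ (fun _ => hl _) (fun _ => hl _) s fun θ => ?_⟩
  have hfd : Module.Finite ℂ E := Module.Finite.of_basis e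
  have hk : Module.finrank ℂ E = k := by simpa using Module.finrank_eq_card_basis e
  let B : Module.Basis (Fin k) ℂ E := Module.Basis.mk hb
    (hb.span_eq_top_of_card_eq_finrank' (by simp [hk])).ge
  have hB : ∀ i, B i = y (b i) := fun i => by simp [B]
  have exch : ∀ (z : J) (j : Fin k), B.repr (y z) j ≠ 0 → l z ≤ l (b j) := by
    intro z j hz
    have h1 : LinearIndependent ℂ (fun i => y (Function.update b j z i)) := by
      have := hb.update j (y z) ⟨1, by simp, B.repr (y z), by simpa using hz, by
        have := B.linearCombination_repr (y z)
        rw [show (fun i => y (b i)) = B from funext fun i => (hB i).symm, this, one_smul]⟩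
      have h0 : (fun i => y (Function.update b j z i)) =
          Function.update (fun i => y (b i)) j (y z) := by
        funext i
        by_cases h : i = j
        · subst h; simp
        · simp [h]
      rw [h0]
      exact this
    have h2 := hmax _ h1
    rw [← Finset.add_sum_erase _ _ (mem_univ j), ← Finset.add_sum_erase (a := j) univ (fun j => l (b j)) (mem_univ j)] at h2
    rw [Finset.sum_congr (g := fun j => l (b j)) rfl (fun i hi => by
      rw [Function.update_of_ne (Finset.ne_of_mem_erase hi)])] at h2
    rw [Function.update_self] at h2
    linarith
  let U : Submodule ℂ E := Submodule.span ℂ (B '' {j | θ ≤ l (b j)})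
  have h1 : (Module.finrank ℂ U : ℝ) ≤ ((univ.filter fun j => θ ≤ l (b j)).card : ℝ) := by
    have := finrank_span_finset_le_card (R := ℂ) ((univ.filter fun j => θ ≤ l (b j)).image B)
    have h3 := Finset.card_image_le (s := (univ.filter fun j => θ ≤ l (b j))) (f := B)
    have h4 : ((((univ.filter fun j => θ ≤ l (b j)).image B) : Finset E) : Set E) = B '' {j | θ ≤ l (b j)} := by
      simp
    rw [h4] at this
    exact_mod_cast this.trans h3
  have hs0 : 0 ≤ s ∨ k = 0 := by
    by_cases hk0 : k = 0
    · right; exact hk0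
    left
    have := hs ⊤
    rw [finrank_top, hk] at this
    have h5 : (0:ℝ) ≤ (Nat.card {i // y (x i) ∈ (⊤ : Submodule ℂ E)} : ℝ) := Nat.cast_nonneg _
    have h6 : (0:ℝ) < k := by exact_mod_cast Nat.pos_of_ne_zero hk0
    by_contra hneg
    push Not at hneg
    nlinarith
  have h2 : ((univ.filter fun i => θ ≤ l (x i)).card : ℝ) ≤ (Nat.card {i // y (x i) ∈ U} : ℝ) := by
    rw [Nat.card_eq_fintype_card, Fintype.card_subtype]
    refine Nat.cast_le.2 (Finset.card_le_card fun i hi => ?_)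
    simp only [mem_filter, mem_univ, true_and] at hi ⊢
    rw [Module.Basis.mem_span_image]
    intro j hj
    have := exch (x i) j (by simpa using hj)
    exact hi.trans this
  refine h2.trans ((hs U).trans ?_)
  rcases hs0 with hs0 | hk0
  · exact mul_le_mul_of_nonneg_left h1 hs0
  · subst hk0
    have : Module.finrank ℂ U = 0 := by
      have := Submodule.finrank_le U
      omega
    rw [this]; simp

section
variable {E : Type*} [NormedAddCommGroup E] [InnerProductSpace ℂ E] [FiniteDimensional ℂ E]

lemma det_bound {k : ℕ} (e : Module.Basis (Fin k) ℂ E) :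
    ∃ K : ℝ, 0 < K ∧ ∀ v : Fin k → E, ‖e.det v‖ ≤ K * ∏ i, ‖v i‖ := by
  refine MultilinearMap.exists_bound_of_continuous e.det.toMultilinearMap ?_
  change Continuous fun v => Matrix.det (e.toMatrix v)
  refine Continuous.matrix_det ?_
  refine continuous_matrix fun i j => ?_
  change Continuous fun v : Fin k → E => e.coord i (v j)
  exact (LinearMap.continuous_of_finiteDimensional (e.coord i)).comp (continuous_apply j)

lemma potential_bound {ι : Type*} [Fintype ι] (x : ι → E) (hx : ∀ i, ‖x i‖ = 1) (s : ℝ) (hs0 : 0 ≤ s)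
    (hs : ∀ U : Submodule ℂ E, (Nat.card {i // x i ∈ U} : ℝ) ≤ s * Module.finrank ℂ U) :
    ∃ C : ℝ, ∀ A : E →ₗ[ℂ] E, (∀ v, ‖A v‖ ≤ ‖v‖) → LinearMap.det A ≠ 0 →
      s * Real.log ‖LinearMap.det A‖ - ∑ i, Real.log ‖A (x i)‖ ≤ C := by
  classical
  let o := stdOrthonormalBasis ℂ E
  let e := o.toBasis
  obtain ⟨K, hK, hdet⟩ := det_bound e
  let y : ι ⊕ Fin (Module.finrank ℂ E) → E := Sum.elim x e
  have hy : ∀ j, ‖y j‖ = 1 := by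
    rintro (i | i)
    · exact hx i
    · simp [y, e]
  let D : ℝ := ∑ b : Fin (Module.finrank ℂ E) → ι ⊕ Fin (Module.finrank ℂ E),
    |Real.log ‖e.det (fun i => y (b i))‖|
  refine ⟨s * (Real.log K + D), fun A hA hdA => ?_⟩
  have hker : LinearMap.ker A = ⊥ := by
    by_contra h
    exact hdA (LinearMap.det_eq_zero_iff_ker_ne_bot.2 h)
  have hApos : ∀ j, 0 < ‖A (y j)‖ := by
    intro j
    rw [norm_pos_iff]
    intro h0
    have := (LinearMap.ker_eq_bot'.1 hker) _ h0
    have h1 := hy j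
    rw [this] at h1
    simp at h1
  obtain ⟨b, hb, hsum⟩ := min_basis e y Sum.inr (fun i => rfl) Sum.inl s hs
    (fun j => - Real.log ‖A (y j)‖) (fun j => by
      have : Real.log ‖A (y j)‖ ≤ 0 := Real.log_nonpos (norm_nonneg _) ((hA _).trans (hy j).le)
      linarith)
  have hbd : e.det (fun i => y (b i)) ≠ 0 := by
    have := (e.is_basis_iff_det (v := fun i => y (b i))).1 ⟨hb, hb.span_eq_top_of_card_eq_finrank' (by simp)⟩
    exact this.ne_zero
  have h1 : e.det (A ∘ fun i => y (b i)) = LinearMap.det A * e.det (fun i => y (b i)) := e.det_comp A _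
  have h2 := hdet (A ∘ fun i => y (b i))
  rw [h1, norm_mul] at h2
  simp only [Function.comp] at h2
  have h3 := Real.log_le_log (by positivity) h2
  rw [Real.log_mul (by simpa using hdA) (by simpa using hbd), Real.log_mul hK.ne'
    (Finset.prod_ne_zero_iff.2 fun i _ => (hApos (b i)).ne'), Real.log_prod (fun i _ => (hApos (b i)).ne')] at h3
  have h4 : |Real.log ‖e.det (fun i => y (b i))‖| ≤ D :=
    Finset.single_le_sum (f := fun b : Fin (Module.finrank ℂ E) → ι ⊕ Fin (Module.finrank ℂ E) => 
      |Real.log ‖e.det (fun i => y (b i))‖|) (fun _ _ => abs_nonneg _) (mem_univ b)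
  have h5 := neg_abs_le (Real.log ‖e.det (fun i => y (b i))‖)
  have h6 : Real.log ‖LinearMap.det A‖ ≤ (Real.log K + D) + ∑ i, Real.log ‖A (y (b i))‖ := by
    linarith
  have h7 := mul_le_mul_of_nonneg_left h6 hs0
  simp only [Finset.sum_neg_distrib] at hsum
  have h8 : ∀ i, y (Sum.inl i) = x i := fun i => rfl
  simp only [h8] at hsum
  linarith

lemma exists_position {ι : Type*} [Fintype ι] (x : ι → E) (hx : ∀ i, ‖x i‖ = 1) (s : ℝ) (hs0 : 0 < s)
    (hs : ∀ U : Submodule ℂ E, (Nat.card {i // x i ∈ U} : ℝ) ≤ s * Module.finrank ℂ U) :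
    ∃ A : E →ₗ[ℂ] E, LinearMap.ker A = ⊥ ∧
      ∀ y : E, ∑ i, ‖inner ℂ y (A (x i))‖ ^ 2 / ‖A (x i)‖ ^ 2 ≤ 4 * s * ‖y‖ ^ 2 := by
  classical
  obtain ⟨C, hC⟩ := potential_bound x hx s hs0.le hs
  let S : Set ℝ := {r | ∃ A : E →ₗ[ℂ] E, (∀ v, ‖A v‖ ≤ ‖v‖) ∧ LinearMap.det A ≠ 0 ∧
      r = s * Real.log ‖LinearMap.det A‖ - ∑ i, Real.log ‖A (x i)‖}
  have hbdd : BddAbove S := ⟨C, by rintro r ⟨A, h1, h2, rfl⟩; exact hC A h1 h2⟩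
  have hne : S.Nonempty := ⟨_, LinearMap.id, fun v => le_rfl, by simp, rfl⟩
  obtain ⟨r, ⟨A, hA, hdA, rfl⟩, hr⟩ := exists_lt_of_lt_csSup hne (show sSup S - s / 2 < sSup S by linarith)
  have hker : ∀ A : E →ₗ[ℂ] E, LinearMap.det A ≠ 0 → LinearMap.ker A = ⊥ := by
    intro A hdA
    by_contra h
    exact hdA (LinearMap.det_eq_zero_iff_ker_ne_bot.2 h)
  have hpos : ∀ A : E →ₗ[ℂ] E, LinearMap.det A ≠ 0 → ∀ i, 0 < ‖A (x i)‖ := by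
    intro A hdA i
    rw [norm_pos_iff]
    intro h0
    have := (LinearMap.ker_eq_bot'.1 (hker A hdA)) _ h0
    have h1 := hx i
    rw [this] at h1
    simp at h1
  refine ⟨A, hker A hdA, ?_⟩
  have unit : ∀ y : E, ‖y‖ = 1 → ∑ i, ‖inner ℂ y (A (x i))‖ ^ 2 / ‖A (x i)‖ ^ 2 ≤ 4 * s := by
    intro y hy
    by_contra hcon
    push Not at hcon
    let B : E →ₗ[ℂ] E := LinearMap.transvection ((-(1/2 : ℂ)) • (innerₛₗ ℂ y)) y
    have hyy : inner ℂ y y = (1 : ℂ) := by rw [inner_self_eq_norm_sq_to_K, hy]; simp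
    have hdB : LinearMap.det B = 1 / 2 := by
      simp only [B, LinearMap.transvection.det]
      simp [hy]; norm_num
    have hBv : ∀ v, ‖B v‖ ^ 2 = ‖v‖ ^ 2 - 3 / 4 * ‖inner ℂ y v‖ ^ 2 := by
      intro v
      have h1 : B v = v - ((1/2 : ℂ) * inner ℂ y v) • y := by
        simp [B, LinearMap.transvection.apply, sub_eq_add_neg]
      rw [h1, @norm_sub_sq ℂ, inner_smul_right, norm_smul, hy, norm_mul]
      have h2 : (1/2 : ℂ) * inner ℂ y v * inner ℂ v y = ((1/2 * ‖inner ℂ y v‖ ^ 2 : ℝ) : ℂ) := by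
        rw [← inner_conj_symm v y, mul_assoc, Complex.mul_conj, Complex.normSq_eq_norm_sq]
        push_cast; ring
      rw [h2]
      simp only [RCLike.re_to_complex, Complex.ofReal_re]
      norm_num
      ring
    have hBA : LinearMap.det (B ∘ₗ A) = 1 / 2 * LinearMap.det A := by
      rw [LinearMap.det_comp, hdB]
    have hBAne : LinearMap.det (B ∘ₗ A) ≠ 0 := by
      rw [hBA]; exact mul_ne_zero (by norm_num) hdA
    have hmem : s * Real.log ‖LinearMap.det (B ∘ₗ A)‖ - ∑ i, Real.log ‖(B ∘ₗ A) (x i)‖ ∈ S := by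
      refine ⟨B ∘ₗ A, fun v => ?_, hBAne, rfl⟩
      have : ‖B (A v)‖ ≤ ‖A v‖ := by
        apply le_of_sq_le_sq _ (norm_nonneg _)
        rw [hBv]
        nlinarith [sq_nonneg ‖inner ℂ y (A v)‖]
      exact this.trans (hA v)
    have hle := le_csSup hbdd hmem
    rw [hBA, norm_mul, Real.log_mul (by norm_num) (by simpa using hdA)] at hle
    have hn : ‖(1/2 : ℂ)‖ = 1/2 := by norm_num
    rw [hn] at hle
    have hlog : ∀ i, Real.log ‖(B ∘ₗ A) (x i)‖ ≤ Real.log ‖A (x i)‖ -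
        3 / 8 * (‖inner ℂ y (A (x i))‖ ^ 2 / ‖A (x i)‖ ^ 2) := by
      intro i
      have p1 := hpos A hdA i
      have p2 := hpos _ hBAne i
      have h1 := Real.log_le_sub_one_of_pos (show 0 < ‖(B ∘ₗ A) (x i)‖ ^ 2 / ‖A (x i)‖ ^ 2 by positivity)
      rw [Real.log_div (by positivity) (by positivity), Real.log_pow, Real.log_pow] at h1
      rw [LinearMap.comp_apply, hBv, sub_div, div_self (by positivity)] at h1
      rw [LinearMap.comp_apply]
      push_cast at h1
      have : 3 / 4 * ‖inner ℂ y (A (x i))‖ ^ 2 / ‖A (x i)‖ ^ 2 = 3 / 4 * (‖inner ℂ y (A (x i))‖ ^ 2 / ‖A (x i)‖ ^ 2) := by ring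
      linarith
    have hsum := Finset.sum_le_sum (fun i (_ : i ∈ univ) => hlog i)
    rw [Finset.sum_sub_distrib, ← Finset.mul_sum] at hsum
    have hl2 : Real.log (1/2) > -1 := by
      have := Real.log_two_lt_d9
      rw [one_div, Real.log_inv]; linarith
    nlinarith
  intro y
  by_cases hy : y = 0
  · subst hy; simp
  have hn : 0 < ‖y‖ := norm_pos_iff.2 hy
  have h1 := unit ((‖y‖⁻¹ : ℂ) • y) (by
    rw [norm_smul]; simp [hn.ne'])
  have h2 : ∀ i, ‖inner ℂ ((‖y‖⁻¹ : ℂ) • y) (A (x i))‖ ^ 2 / ‖A (x i)‖ ^ 2 = 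
    (‖inner ℂ y (A (x i))‖ ^ 2 / ‖A (x i)‖ ^ 2) / ‖y‖ ^ 2 := by
    intro i
    rw [inner_smul_left, norm_mul]
    simp
    ring
  simp only [h2] at h1
  rw [← Finset.sum_div, div_le_iff₀ (by positivity)] at h1
  exact h1

lemma key_position {ι : Type*} [Fintype ι] (x : ι → E) (hx : ∀ i, x i ≠ 0) (s : ℝ) (hs0 : 0 < s) :
    ∃ (W : Submodule ℂ E) (T : E →ₗ[ℂ] E), s * Module.finrank ℂ W ≤ Fintype.card ι ∧
      (∀ v, T v = 0 ↔ v ∈ W) ∧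
      ∀ y : E, ∑ i, ‖inner ℂ y (T (x i))‖ ^ 2 / ‖T (x i)‖ ^ 2 ≤ 4 * s * ‖y‖ ^ 2 := by
  classical
  let cnt : Submodule ℂ E → ℕ := fun W => (univ.filter fun i => x i ∈ W).card
  obtain ⟨W, hW⟩ : ∃ W : Submodule ℂ E, ∀ W' : Submodule ℂ E,
      (cnt W' : ℝ) - s * Module.finrank ℂ W' ≤ cnt W - s * Module.finrank ℂ W := by
    let p : Submodule ℂ E → Fin (Fintype.card ι + 1) × Fin (Module.finrank ℂ E + 1) := fun W =>
      (⟨cnt W, Nat.lt_succ_of_le (Finset.card_le_univ _)⟩, ⟨Module.finrank ℂ W, Nat.lt_succ_of_le (Submodule.finrank_le W)⟩)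
    obtain ⟨q, ⟨W, rfl⟩, hq⟩ := Set.exists_max_image (Set.range p)
      (fun q => (q.1 : ℝ) - s * (q.2 : ℕ)) (Set.toFinite _) ⟨_, ⊥, rfl⟩
    exact ⟨W, fun W' => hq _ ⟨W', rfl⟩⟩
  let I := {i // x i ∉ W}
  let P : E →ₗ[ℂ] Wᗮ := (Wᗮ.orthogonalProjectionOnto : E →L[ℂ] Wᗮ).toLinearMap
  have hP : ∀ v, P v = 0 ↔ v ∈ W := by
    intro v
    change Wᗮ.orthogonalProjectionOnto v = 0 ↔ _
    rw [Submodule.orthogonalProjectionOnto_eq_zero_iff, Submodule.orthogonal_orthogonal]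
  have hPW : ∀ v, v - (P v : E) ∈ W := by
    intro v
    have : v - (P v : E) ∈ Wᗮᗮ := Submodule.sub_starProjection_mem_orthogonal v
    rwa [Submodule.orthogonal_orthogonal] at this
  have hPI : ∀ i : I, 0 < ‖P (x i)‖ := fun i => norm_pos_iff.2 fun h => i.2 ((hP _).1 h)
  let z : I → Wᗮ := fun i => ((‖P (x i)‖⁻¹ : ℝ) : ℂ) • P (x i)
  have hz : ∀ i, ‖z i‖ = 1 := by
    intro i
    simp only [z, norm_smul]
    rw [Complex.norm_real, norm_inv, norm_norm, inv_mul_cancel₀ (hPI i).ne']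
  have hcount : ∀ U : Submodule ℂ Wᗮ, (Nat.card {i // z i ∈ U} : ℝ) ≤ s * Module.finrank ℂ U := by
    intro U
    let W' := W ⊔ U.map Wᗮ.subtype
    have h1 := hW W'
    have h2 : Module.finrank ℂ W' ≤ Module.finrank ℂ W + Module.finrank ℂ U := by
      refine (Submodule.finrank_add_le_finrank_add_finrank _ _).trans ?_
      gcongr
      exact Submodule.finrank_map_le _ _
    have h3 : Nat.card {i // z i ∈ U} + cnt W ≤ cnt W' := by
      rw [Nat.card_eq_fintype_card, Fintype.card_subtype]
      have : (univ.filter fun i => z i ∈ U).card = ((univ.filter fun i => z i ∈ U).map (Function.Embedding.subtype _)).card := by simp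
      rw [this]
      simp only [cnt]
      rw [← Finset.card_union_of_disjoint]
      · refine Finset.card_le_card fun i hi => ?_
        rw [Finset.mem_union] at hi
        rw [mem_filter]
        refine ⟨mem_univ _, ?_⟩
        rcases hi with hi | hi
        · rw [Finset.mem_map] at hi
          obtain ⟨j, hj, rfl⟩ := hi
          simp only [mem_filter, mem_univ, true_and] at hj
          have hj2 : P (x j) ∈ U := by
            have := U.smul_mem ((‖P (x j)‖ : ℝ) : ℂ) hj
            simp only [z, smul_smul] at this
            rw [← Complex.ofReal_mul, mul_inv_cancel₀ (hPI j).ne'] at this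
            simpa using this
          have h5 := hPW (x j)
          have : x j = (x j - (P (x j) : E)) + (P (x j) : E) := by abel
          change x j ∈ W'
          rw [this]
          exact Submodule.add_mem_sup h5 (Submodule.mem_map.2 ⟨_, hj2, rfl⟩)
        · exact Submodule.mem_sup_left (mem_filter.1 hi).2
      · rw [Finset.disjoint_left]
        intro i hi hi2
        rw [Finset.mem_map] at hi
        obtain ⟨j, hj, rfl⟩ := hi
        exact j.2 (mem_filter.1 hi2).2
    have h2' : (Module.finrank ℂ W' : ℝ) ≤ Module.finrank ℂ W + Module.finrank ℂ U := by exact_mod_cast h2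
    have h3' : (Nat.card {i // z i ∈ U} : ℝ) + cnt W ≤ cnt W' := by exact_mod_cast h3
    nlinarith
  obtain ⟨A, hA, hsum⟩ := exists_position z hz s hs0 hcount
  refine ⟨W, Wᗮ.subtype ∘ₗ A ∘ₗ P, ?_, ?_, ?_⟩
  · have h1 := hW ⊥
    have h2 : (cnt W : ℝ) ≤ Fintype.card ι := by exact_mod_cast Finset.card_le_univ _
    have h3 : (0:ℝ) ≤ cnt ⊥ := Nat.cast_nonneg _
    simp only [finrank_bot, Nat.cast_zero, mul_zero, sub_zero] at h1
    linarith
  · intro v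
    rw [← hP]
    simp only [LinearMap.comp_apply, Submodule.subtype_apply, ZeroMemClass.coe_eq_zero]
    exact ⟨fun h => (LinearMap.ker_eq_bot'.1 hA) _ h, fun h => by rw [h, map_zero]⟩
  · intro y
    have h1 := hsum (P y)
    have hterm : ∀ i, ‖inner ℂ y ((Wᗮ.subtype ∘ₗ A ∘ₗ P) (x i))‖ ^ 2 / ‖(Wᗮ.subtype ∘ₗ A ∘ₗ P) (x i)‖ ^ 2 =
        ‖inner ℂ (P y) (A (P (x i)))‖ ^ 2 / ‖A (P (x i))‖ ^ 2 := by
      intro i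
      simp only [LinearMap.comp_apply, Submodule.subtype_apply, Submodule.coe_norm]
      congr 3
      have : inner ℂ y ((A (P (x i)) : Wᗮ) : E) = inner ℂ (y - (P y : E)) ((A (P (x i)) : Wᗮ) : E) + inner ℂ (P y : E) ((A (P (x i)) : Wᗮ) : E) := by
        rw [← inner_add_left]; simp
      rw [this, (Submodule.mem_orthogonal W _).1 (A (P (x i))).2 _ (hPW y), zero_add]
      rfl
    simp only [hterm]
    have hsplit : ∑ i, ‖inner ℂ (P y) (A (P (x i)))‖ ^ 2 / ‖A (P (x i))‖ ^ 2 =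
        ∑ i : I, ‖inner ℂ (P y) (A (z i))‖ ^ 2 / ‖A (z i)‖ ^ 2 := by
      rw [← Finset.sum_filter_add_sum_filter_not univ (fun i => x i ∈ W)]
      rw [Finset.sum_eq_zero (s := univ.filter fun i => x i ∈ W), zero_add]
      · rw [Finset.sum_subtype (p := fun i => x i ∉ W) _ (fun i => by simp)]
        refine Finset.sum_congr rfl fun i _ => ?_
        simp only [z, map_smul, inner_smul_right, norm_smul, norm_mul, mul_pow]
        rw [mul_div_mul_left]
        have := hPI i
        rw [Complex.norm_real, norm_inv, norm_norm]
        exact pow_ne_zero _ (inv_ne_zero this.ne')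
      · intro i hi
        rw [(hP _).2 (mem_filter.1 hi).2]
        simp
    rw [hsplit]
    refine h1.trans ?_
    have : ‖P y‖ ≤ ‖y‖ := Submodule.norm_orthogonalProjectionOnto_apply_le _ y
    gcongr

/-- a dependent triple with not all vectors zero has a large correlation -/
lemma triple_corr (a b c : E) (α β γ : ℂ) (hα : α ≠ 0) (hβ : β ≠ 0) (hγ : γ ≠ 0)
    (h : α • a + β • b + γ • c = 0) (hne : a ≠ 0 ∨ b ≠ 0 ∨ c ≠ 0) :
    1 / 2 ≤ ‖inner ℂ a b‖ ^ 2 / (‖a‖ ^ 2 * ‖b‖ ^ 2) + ‖inner ℂ a c‖ ^ 2 / (‖a‖ ^ 2 * ‖c‖ ^ 2) +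
      ‖inner ℂ b c‖ ^ 2 / (‖b‖ ^ 2 * ‖c‖ ^ 2) := by
  have main : ∀ (a b c : E) (α β γ : ℂ), α ≠ 0 → α • a + β • b + γ • c = 0 → a ≠ 0 →
      ‖β‖ * ‖b‖ ≤ ‖α‖ * ‖a‖ → ‖γ‖ * ‖c‖ ≤ ‖α‖ * ‖a‖ →
      1 / 2 ≤ ‖inner ℂ a b‖ ^ 2 / (‖a‖ ^ 2 * ‖b‖ ^ 2) + ‖inner ℂ a c‖ ^ 2 / (‖a‖ ^ 2 * ‖c‖ ^ 2) := by
    intro a b c α β γ hα h ha h1 h2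
    have pa : 0 < ‖a‖ := norm_pos_iff.2 ha
    have pα : 0 < ‖α‖ := norm_pos_iff.2 hα
    have h3 : α * inner ℂ a a + β * inner ℂ a b + γ * inner ℂ a c = 0 := by
      have := congrArg (fun v => inner ℂ a v) h
      simpa [inner_add_right, inner_smul_right] using this
    have h4 : ‖α‖ * ‖a‖ ^ 2 ≤ ‖β‖ * ‖inner ℂ a b‖ + ‖γ‖ * ‖inner ℂ a c‖ := by
      have e : α * inner ℂ a a = -(β * inner ℂ a b + γ * inner ℂ a c) := by linear_combination h3
      have := congrArg norm e
      rw [norm_neg, norm_mul, inner_self_eq_norm_sq_to_K] at this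
      have n := norm_add_le (β * inner ℂ a b) (γ * inner ℂ a c)
      rw [← this, norm_mul, norm_mul] at n
      simpa using n
    have corr : ∀ (v : E) (ν : ℂ), ‖ν‖ * ‖v‖ ≤ ‖α‖ * ‖a‖ →
        ‖ν‖ * ‖inner ℂ a v‖ ≤ (‖α‖ * ‖a‖ ^ 2) * (‖inner ℂ a v‖ / (‖a‖ * ‖v‖)) := by
      intro v ν hν
      by_cases hv : v = 0
      · subst hv; simp
      have pv : 0 < ‖v‖ := norm_pos_iff.2 hv
      rw [mul_div_assoc', le_div_iff₀ (by positivity)]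
      have := mul_le_mul_of_nonneg_right hν (show 0 ≤ ‖a‖ * ‖inner ℂ a v‖ by positivity)
      nlinarith
    have h5 := corr b β h1
    have h6 := corr c γ h2
    have e : ∀ v : E, ‖inner ℂ a v‖ ^ 2 / (‖a‖ ^ 2 * ‖v‖ ^ 2) = (‖inner ℂ a v‖ / (‖a‖ * ‖v‖)) ^ 2 := by
      intro v; rw [div_pow, mul_pow]
    rw [e, e]
    set X := ‖inner ℂ a b‖ / (‖a‖ * ‖b‖)
    set Y := ‖inner ℂ a c‖ / (‖a‖ * ‖c‖)
    have h7 : 1 ≤ X + Y := by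
      have : (‖α‖ * ‖a‖ ^ 2) * 1 ≤ (‖α‖ * ‖a‖ ^ 2) * (X + Y) := by nlinarith
      exact le_of_mul_le_mul_left this (by positivity)
    nlinarith [sq_nonneg (X - Y)]
  have nz : ∀ (a b : E), 0 ≤ ‖inner ℂ a b‖ ^ 2 / (‖a‖ ^ 2 * ‖b‖ ^ 2) := fun a b => by positivity
  have sy : ∀ (a b : E), ‖inner ℂ a b‖ ^ 2 / (‖a‖ ^ 2 * ‖b‖ ^ 2) = ‖inner ℂ b a‖ ^ 2 / (‖b‖ ^ 2 * ‖a‖ ^ 2) := by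
    intro a b
    rw [norm_inner_symm, mul_comm]
  have zz : ∀ (a : E) (α : ℂ), α ≠ 0 → ‖α‖ * ‖a‖ ≤ 0 → a = 0 := by
    intro a α hα h
    have := norm_pos_iff.2 hα
    by_contra ha
    have := norm_pos_iff.2 ha
    have : 0 < ‖α‖ * ‖a‖ := by positivity
    linarith
  have p1 : 0 ≤ ‖α‖ * ‖a‖ := by positivity
  by_cases c1 : ‖β‖ * ‖b‖ ≤ ‖α‖ * ‖a‖ ∧ ‖γ‖ * ‖c‖ ≤ ‖α‖ * ‖a‖
  · have ha : a ≠ 0 := by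
      rintro rfl
      simp only [norm_zero, mul_zero] at c1
      have := zz b β hβ c1.1
      have := zz c γ hγ c1.2
      simp_all
    have := main a b c α β γ hα h ha c1.1 c1.2
    linarith [nz b c]
  by_cases c2 : ‖α‖ * ‖a‖ ≤ ‖β‖ * ‖b‖ ∧ ‖γ‖ * ‖c‖ ≤ ‖β‖ * ‖b‖
  · have hb : b ≠ 0 := by
      rintro rfl
      simp only [norm_zero, mul_zero] at c2
      have := zz a α hα c2.1
      have := zz c γ hγ c2.2
      simp_all
    have := main b a c β α γ hβ (by rw [← h]; abel) hb c2.1 c2.2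
    rw [sy b a] at this
    linarith [nz a c]
  · have c3 : ‖α‖ * ‖a‖ ≤ ‖γ‖ * ‖c‖ ∧ ‖β‖ * ‖b‖ ≤ ‖γ‖ * ‖c‖ := by
      rw [not_and_or, not_le, not_le] at c1 c2
      constructor <;> rcases c1 with c1 | c1 <;> rcases c2 with c2 | c2 <;> linarith
    have hc : c ≠ 0 := by
      rintro rfl
      simp only [norm_zero, mul_zero] at c3
      have := zz a α hα c3.1
      have := zz b β hβ c3.2
      simp_all
    have := main c a b γ α β hγ (by rw [← h]; abel) hc c3.1 c3.2
    rw [sy c a, sy c b] at this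
    linarith [nz a b]

end

lemma count_pairs {P : Type*} (V : Finset P) (Col : P → P → P → Prop)
    (h1 : ∀ p q w, Col p q w → Col q p w) (h2 : ∀ p q w, Col p q w → Col p w q)
    (N : P → P → ℝ)
    (hN1 : ∀ p q, N p q = N q p)
    (hN : ∀ p ∈ V, ∀ q ∈ V, ∀ w ∈ V, Col p q w → N p q = N p w)
    (hNc : ∀ p ∈ V, ∀ q ∈ V, N p q = (Nat.card {w // w ∈ V ∧ Col p q w} : ℝ))
    (g : P → P → ℝ) (hg : ∀ p q, 0 ≤ g p q) 
    (Q : Finset (P × P)) (hQ : Q ⊆ V ×ˢ V) (hQ1 : ∀ p ∈ Q, ∃ w ∈ V, Col p.1 p.2 w)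
    (hQ2 : ∀ p ∈ Q, ∀ w ∈ V, Col p.1 p.2 w → 1 / 2 ≤ g p.1 p.2 + g p.1 w + g p.2 w) :
    (Q.card : ℝ) ≤ 6 * ∑ p ∈ V, ∑ q ∈ V, g p q := by
  classical
  let ω : P → P → P → ℝ := fun p q w => if Col p q w then 1 / N p q else 0
  have hcard : ∀ p ∈ V, ∀ q ∈ V, N p q = ((V.filter fun w => Col p q w).card : ℝ) := by
    intro p hp q hq
    rw [hNc p hp q hq]
    congr 1
    exact Nat.subtype_card _ (fun w => by simp)
  have hN0 : ∀ p ∈ V, ∀ q ∈ V, 0 ≤ N p q := fun p hp q hq => by rw [hcard p hp q hq]; positivity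
  have hω0 : ∀ p ∈ V, ∀ q ∈ V, ∀ w, 0 ≤ ω p q w := by
    intro p hp q hq w
    simp only [ω]
    have := hN0 p hp q hq
    split_ifs
    · positivity
    · exact le_rfl
  have hωsum : ∀ p ∈ V, ∀ q ∈ V, ∑ w ∈ V, ω p q w = N p q * (1 / N p q) := by
    intro p hp q hq
    simp only [ω]
    rw [← Finset.sum_filter, Finset.sum_const, nsmul_eq_mul, ← hcard p hp q hq]
  have hω1 : ∀ p ∈ V, ∀ q ∈ V, ∑ w ∈ V, ω p q w ≤ 1 := by
    intro p hp q hq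
    rw [hωsum p hp q hq, mul_one_div]
    exact div_self_le_one _
  have s1 : ∀ p q w, ω p q w = ω q p w := by
    intro p q w
    have : Col p q w ↔ Col q p w := ⟨h1 _ _ _, h1 _ _ _⟩
    simp only [ω, this, hN1 p q]
  have s2 : ∀ p ∈ V, ∀ q ∈ V, ∀ w ∈ V, ω p q w = ω p w q := by
    intro p hp q hq w hw
    simp only [ω]
    by_cases h : Col p q w
    · rw [if_pos h, if_pos (h2 _ _ _ h), hN p hp q hq w hw h]
    · rw [if_neg h, if_neg fun h' => h (h2 _ _ _ h')]
  have S1 : ∑ p ∈ V, ∑ q ∈ V, ∑ w ∈ V, ω p q w * g p q ≤ ∑ p ∈ V, ∑ q ∈ V, g p q := by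
    refine Finset.sum_le_sum fun p hp => Finset.sum_le_sum fun q hq => ?_
    rw [← Finset.sum_mul]
    exact mul_le_of_le_one_left (hg _ _) (hω1 p hp q hq)
  have S2 : ∑ p ∈ V, ∑ q ∈ V, ∑ w ∈ V, ω p q w * g p w = ∑ p ∈ V, ∑ q ∈ V, ∑ w ∈ V, ω p q w * g p q := by
    refine Finset.sum_congr rfl fun p hp => ?_
    rw [Finset.sum_comm]
    refine Finset.sum_congr rfl fun q hq => Finset.sum_congr rfl fun w hw => ?_
    rw [s2 p hp w hw q hq]
  have S3 : ∑ p ∈ V, ∑ q ∈ V, ∑ w ∈ V, ω p q w * g q w = ∑ p ∈ V, ∑ q ∈ V, ∑ w ∈ V, ω p q w * g p w := by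
    rw [Finset.sum_comm]
    refine Finset.sum_congr rfl fun p hp => Finset.sum_congr rfl fun q hq => Finset.sum_congr rfl fun w hw => ?_
    rw [s1 q p w]
  have step : (Q.card : ℝ) ≤ ∑ x ∈ Q, ∑ w ∈ V, ω x.1 x.2 w * (2 * (g x.1 x.2 + g x.1 w + g x.2 w)) := by
    rw [← nsmul_one, ← Finset.sum_const]
    refine Finset.sum_le_sum fun x hx => ?_
    obtain ⟨hp, hq⟩ := Finset.mem_product.1 (hQ hx)
    obtain ⟨w, hw, hc⟩ := hQ1 x hx
    have hpos : 0 < N x.1 x.2 := by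
      rw [hcard _ hp _ hq]
      exact_mod_cast Finset.card_pos.2 ⟨w, by simp [hw, hc]⟩
    calc (1:ℝ) = ∑ w ∈ V, ω x.1 x.2 w := by rw [hωsum _ hp _ hq, mul_one_div, div_self hpos.ne']
      _ ≤ _ := Finset.sum_le_sum fun w hw => by
        by_cases h : Col x.1 x.2 w
        · have := hQ2 x hx w hw h
          exact le_mul_of_one_le_right (hω0 _ hp _ hq _) (by linarith)
        · simp [ω, h]
  have step2 : ∑ x ∈ Q, ∑ w ∈ V, ω x.1 x.2 w * (2 * (g x.1 x.2 + g x.1 w + g x.2 w)) ≤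
      ∑ x ∈ V ×ˢ V, ∑ w ∈ V, ω x.1 x.2 w * (2 * (g x.1 x.2 + g x.1 w + g x.2 w)) := by
    refine Finset.sum_le_sum_of_subset_of_nonneg hQ fun x hx _ => Finset.sum_nonneg fun w hw => ?_
    obtain ⟨hp, hq⟩ := Finset.mem_product.1 hx
    have := hg x.1 x.2
    have := hg x.1 w
    have := hg x.2 w
    exact mul_nonneg (hω0 _ hp _ hq _) (by linarith)
  have step3 : ∑ x ∈ V ×ˢ V, ∑ w ∈ V, ω x.1 x.2 w * (2 * (g x.1 x.2 + g x.1 w + g x.2 w)) =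
      2 * (∑ p ∈ V, ∑ q ∈ V, ∑ w ∈ V, ω p q w * g p q + ∑ p ∈ V, ∑ q ∈ V, ∑ w ∈ V, ω p q w * g p w +
        ∑ p ∈ V, ∑ q ∈ V, ∑ w ∈ V, ω p q w * g q w) := by
    rw [Finset.sum_product]
    simp only [← Finset.sum_add_distrib, Finset.mul_sum]
    refine Finset.sum_congr rfl fun p hp => Finset.sum_congr rfl fun q hq => Finset.sum_congr rfl fun w hw => ?_
    ring
  rw [S3, S2] at step3
  linarith

/-- three distinct collinear points -/
def ColTriple {d : ℕ} (p q w : Fin d → ℂ) : Prop :=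
  p ≠ q ∧ w ≠ p ∧ w ≠ q ∧ w ∈ affineSpan ℂ ({p, q} : Set (Fin d → ℂ))

lemma ColTriple.symm {d : ℕ} {p q w : Fin d → ℂ} (h : ColTriple p q w) : ColTriple q p w :=
  ⟨h.1.symm, h.2.2.1, h.2.1, by rw [Set.pair_comm]; exact h.2.2.2⟩

lemma ColTriple.line {d : ℕ} {p q w : Fin d → ℂ} (h : ColTriple p q w) :
    affineSpan ℂ ({p, w} : Set (Fin d → ℂ)) = affineSpan ℂ ({p, q} : Set (Fin d → ℂ)) := by
  obtain ⟨h1, h2, h3, h4⟩ := h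
  apply le_antisymm
  · exact affineSpan_pair_le_of_mem_of_mem (left_mem_affineSpan_pair ℂ p q) h4
  · refine affineSpan_pair_le_of_mem_of_mem (left_mem_affineSpan_pair ℂ p w) ?_
    obtain ⟨t, rfl⟩ := (mem_affineSpan_pair_iff_exists_lineMap_eq).1 h4
    have ht : t ≠ 0 := by rintro rfl; simp at h2
    refine (mem_affineSpan_pair_iff_exists_lineMap_eq).2 ⟨t⁻¹, ?_⟩
    simp [AffineMap.lineMap_apply, smul_smul, ht]

lemma ColTriple.swap {d : ℕ} {p q w : Fin d → ℂ} (h : ColTriple p q w) : ColTriple p w q :=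
  ⟨h.2.1.symm, h.1.symm, h.2.2.1.symm, by rw [h.line]; exact right_mem_affineSpan_pair ℂ p q⟩

lemma colTriple_card {d : ℕ} (V : Finset (Fin d → ℂ)) {p q w : Fin d → ℂ} (hq : q ∈ V)
    (hw : w ∈ V) (h : ColTriple p q w) :
    Nat.card {z // z ∈ V ∧ ColTriple p q z} = Nat.card {z // z ∈ V ∧ ColTriple p w z} := by
  classical
  have key : ∀ q w : Fin d → ℂ, q ∈ V → w ∈ V → ColTriple p q w → ∀ z, z ∈ V ∧ ColTriple p q z → 
      (Equiv.swap q w z) ∈ V ∧ ColTriple p w (Equiv.swap q w z) := by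
    intro q w hq hw h z ⟨hz, hc⟩
    by_cases hzw : z = w
    · subst hzw
      rw [Equiv.swap_apply_right]
      exact ⟨hq, h.swap⟩
    · rw [Equiv.swap_apply_of_ne_of_ne hc.2.2.1 hzw]
      refine ⟨hz, h.2.1.symm, hc.2.1, hzw, ?_⟩
      rw [h.line]; exact hc.2.2.2
  refine Nat.card_congr ((Equiv.swap q w).subtypeEquiv fun z => ⟨key q w hq hw h z, fun hz => ?_⟩)
  have := key w q hw hq h.swap _ hz
  rw [Equiv.swap_comm w q, Equiv.swap_apply_self] at this
  exact this

/-- homogenization -/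
noncomputable def homog {d : ℕ} (c : ℂ) (v : Fin d → ℂ) : EuclideanSpace ℂ (Fin d ⊕ Unit) :=
  WithLp.toLp 2 (Sum.elim v (fun _ => c))

lemma homog_combo {d : ℕ} (p q : Fin d → ℂ) (a b x y : ℂ) :
    a • homog x p + b • homog y q = homog (a * x + b * y) (a • p + b • q) := by
  ext i
  rcases i with i | i <;> simp [homog]

theorem stmt_15 :
    ∃ C : ℝ, 0 < C ∧ ∀ (d : ℕ) (δ : ℝ), 0 < δ → δ ≤ 1 →
      ∀ (V ℬ : Finset (Fin d → ℂ)), ℬ ⊆ V →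
      δ * (V.card : ℝ) ^ 2 ≤
        ({p : (Fin d → ℂ) × (Fin d → ℂ) |
            p.1 ∈ ℬ ∧ p.2 ∈ V ∧ p.2 ∉ ℬ ∧ p.1 ≠ p.2 ∧
            ∃ w ∈ V, w ≠ p.1 ∧ w ≠ p.2 ∧
              w ∈ affineSpan ℂ ({p.1, p.2} : Set (Fin d → ℂ))}.ncard : ℝ) →
      ∃ ℬ' ⊆ ℬ, (δ / 6) * (V.card : ℝ) ≤ (ℬ'.card : ℝ) ∧
        (Module.finrank ℂ
          ↥(affineSpan ℂ ((ℬ' : Set (Fin d → ℂ)))).direction : ℝ) ≤ C * (1 / δ) := by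
  classical
  refine ⟨32, by norm_num, fun d δ hδ hδ1 V ℬ hℬ hcount => ?_⟩
  rcases V.eq_empty_or_nonempty with hV | hV
  · refine ⟨∅, by simp, by simp [hV], ?_⟩
    have : (affineSpan ℂ ((∅ : Finset (Fin d → ℂ)) : Set (Fin d → ℂ))).direction = ⊥ := by simp
    rw [this, finrank_bot]
    simp only [Nat.cast_zero]
    positivity
  have hn : (0:ℝ) < V.card := by exact_mod_cast hV.card_pos
  obtain ⟨W, T, hdim, hTW, hsum⟩ := key_position (fun v : V => homog 1 (v : Fin d → ℂ))
    (fun v h => by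
      have := congrArg (fun f => f (Sum.inr ())) h
      simp [homog] at this) (δ * V.card / 32) (by positivity)
  rw [Fintype.card_coe] at hdim
  let f : (Fin d → ℂ) → EuclideanSpace ℂ (Fin d ⊕ Unit) := fun v => T (homog 1 v)
  let g : (Fin d → ℂ) → (Fin d → ℂ) → ℝ := fun p q => ‖inner ℂ (f p) (f q)‖ ^ 2 / (‖f p‖ ^ 2 * ‖f q‖ ^ 2)
  have hg : ∀ p q, 0 ≤ g p q := fun p q => by positivity
  have hgsum : ∀ p, ∑ q ∈ V, g p q ≤ δ * V.card / 8 := by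
    intro p
    by_cases hp : f p = 0
    · simp only [g, hp]; simp; positivity
    have hpp : 0 < ‖f p‖ := norm_pos_iff.2 hp
    have h1 := hsum (f p)
    have h2 := Finset.sum_coe_sort V (fun q => ‖inner ℂ (f p) (f q)‖ ^ 2 / ‖f q‖ ^ 2)
    rw [show (∑ i : V, ‖inner ℂ (f p) (f i)‖ ^ 2 / ‖f i‖ ^ 2) = ∑ i : V, ‖inner ℂ (f p) (T (homog 1 (i : Fin d → ℂ)))‖ ^ 2 / ‖T (homog 1 (i : Fin d → ℂ))‖ ^ 2 from rfl] at h2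
    rw [h2] at h1
    have h3 : ∑ q ∈ V, g p q = (∑ q ∈ V, ‖inner ℂ (f p) (f q)‖ ^ 2 / ‖f q‖ ^ 2) / ‖f p‖ ^ 2 := by
      rw [Finset.sum_div]
      refine Finset.sum_congr rfl fun q _ => ?_
      simp only [g]
      rw [div_div, mul_comm]
    rw [h3, div_le_iff₀ (by positivity)]
    linarith
  let ℬ' := ℬ.filter fun b => homog 1 b ∈ W
  let Q0 : Finset ((Fin d → ℂ) × (Fin d → ℂ)) := (ℬ ×ˢ V).filter fun p =>
    ∃ w ∈ V, ColTriple p.1 p.2 w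
  have hQ0 : δ * (V.card : ℝ) ^ 2 ≤ Q0.card := by
    refine hcount.trans ?_
    rw [← Set.ncard_coe_finset]
    refine Nat.cast_le.2 (Set.ncard_le_ncard ?_ (Finset.finite_toSet _))
    rintro ⟨p, q⟩ ⟨h1, h2, h3, h4, w, hw, h5, h6, h7⟩
    simp only [Q0, Finset.coe_filter, Finset.mem_product, Set.mem_ofPred_eq]
    exact ⟨⟨h1, h2⟩, w, hw, h4, h5, h6, h7⟩
  let R := fun p : (Fin d → ℂ) × (Fin d → ℂ) => homog 1 p.1 ∈ W ∧ homog 1 p.2 ∈ W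
  have hsplit := Finset.card_filter_add_card_filter_not (s := Q0) R
  have hA : (Q0.filter R).card ≤ ℬ'.card * V.card := by
    rw [← Finset.card_product]
    refine Finset.card_le_card fun p hp => ?_
    simp only [Q0, R, ℬ', mem_filter, Finset.mem_product] at hp ⊢
    exact ⟨⟨hp.1.1.1, hp.2.1⟩, hp.1.1.2⟩
  have hB : ((Q0.filter fun p => ¬ R p).card : ℝ) ≤ 6 * ∑ p ∈ V, ∑ q ∈ V, g p q := by
    refine count_pairs V ColTriple (fun _ _ _ h => h.symm) (fun _ _ _ h => h.swap)
      (fun p q => (Nat.card {w // w ∈ V ∧ ColTriple p q w} : ℝ)) ?_ ?_ (fun _ _ _ _ => rfl) g hg _ ?_ ?_ ?_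
    · intro p q
      have : ∀ w, (w ∈ V ∧ ColTriple p q w) ↔ (w ∈ V ∧ ColTriple q p w) := fun w =>
        ⟨fun h => ⟨h.1, h.2.symm⟩, fun h => ⟨h.1, h.2.symm⟩⟩
      simp only [this]
    · intro p hp q hq w hw h
      exact congrArg Nat.cast (colTriple_card V hq hw h)
    · intro p hp
      simp only [Q0, mem_filter, Finset.mem_product] at hp ⊢
      exact ⟨hℬ hp.1.1.1, hp.1.1.2⟩
    · intro p hp
      simp only [Q0, mem_filter, Finset.mem_product] at hp
      exact hp.1.2
    · rintro ⟨p, q⟩ hp w hw hc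
      simp only [Q0, R, mem_filter, Finset.mem_product] at hp
      obtain ⟨h1, h2, h3, h4⟩ := hc
      obtain ⟨t, rfl⟩ := (mem_affineSpan_pair_iff_exists_lineMap_eq).1 h4
      have ht : t ≠ 0 := by rintro rfl; simp at h2
      have ht1 : 1 - t ≠ 0 := by
        intro h
        have : t = 1 := by linear_combination -h
        subst this; simp at h3
      refine triple_corr (f p) (f q) (f _) (1 - t) t (-1) ht1 ht (by norm_num) ?_ ?_
      · simp only [f]
        rw [← map_smul, ← map_smul, ← map_smul, ← map_add, ← map_add, homog_combo]
        have : (1 - t) * 1 + t * 1 = (1:ℂ) := by ring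
        rw [this, AffineMap.lineMap_apply_module]
        simp
      · rw [not_and_or, ← hTW, ← hTW] at hp
        rcases hp.2 with h | h
        · exact Or.inl h
        · exact Or.inr (Or.inl h)
  have hB2 : ∑ p ∈ V, ∑ q ∈ V, g p q ≤ V.card * (δ * V.card / 8) := by
    rw [← nsmul_eq_mul]
    exact Finset.sum_le_card_nsmul _ _ _ fun p _ => hgsum p
  refine ⟨ℬ', Finset.filter_subset _ _, ?_, ?_⟩
  · have hA' : ((Q0.filter R).card : ℝ) ≤ ℬ'.card * V.card := by exact_mod_cast hA
    have hs' : ((Q0.filter R).card : ℝ) + (Q0.filter fun p => ¬ R p).card = Q0.card := by exact_mod_cast hsplit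
    have h1 : (δ / 4 * V.card) * V.card ≤ (ℬ'.card : ℝ) * V.card := by nlinarith
    have h2 := le_of_mul_le_mul_right h1 hn
    have : 0 < δ * V.card := by positivity
    linarith
  · have hW : (Module.finrank ℂ W : ℝ) ≤ 32 * (1 / δ) := by
      rw [mul_one_div, le_div_iff₀ hδ]
      have : (Module.finrank ℂ W * δ) * V.card ≤ 32 * (V.card : ℝ) := by linarith
      exact le_of_mul_le_mul_right this hn
    refine le_trans (Nat.cast_le.2 ?_) hW
    rw [direction_affineSpan]
    let L : (Fin d → ℂ) →ₗ[ℂ] EuclideanSpace ℂ (Fin d ⊕ Unit) :=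
      { toFun := homog 0
        map_add' := fun a b => by
          have := homog_combo a b 1 1 0 0
          simpa using this.symm
        map_smul' := fun c a => by
          have := homog_combo a a c 0 0 0
          simpa using this.symm }
    have hL : Function.Injective L := by
      intro a b h
      funext i
      have := congrArg (fun f => f (Sum.inl i)) h
      simpa [L, homog] using this
    rw [(Submodule.equivMapOfInjective L hL _).finrank_eq]
    refine Submodule.finrank_mono ?_
    rw [Submodule.map_le_iff_le_comap, vectorSpan_def, Submodule.span_le]
    rintro _ ⟨a, ha, b, hb, rfl⟩
    simp only [ℬ', Finset.coe_filter, Set.mem_ofPred_eq] at ha hb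
    have h1 := W.sub_mem ha.2 hb.2
    have h2 := homog_combo a b 1 (-1) 1 1
    change homog 0 (a - b) ∈ W
    convert h1 using 1
    simpa [sub_eq_add_neg] using h2.symm
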